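/- For every T > 0 and every nonzero k ∈ ℤ², T / |1 − Ĥ_T(k)| ≤ 4 / (1 − exp(−1/T)); equivalently |1 − Ĥ_T(k)| ≥ (T/4)·(1 − e^{−1/T}). (This is the bound ‖L_T^{-1}‖_{H^s₀} ≤ 4/(1 − e^{−1/T}) for the operator L_T whose Fourier representation is multiplication by (1 − Ĥ_T(k))/T.) -/

import Mathlib

open MeasureTheory Real

/-- The zeroth-order Bessel function `J⁰(k) = (1/π) ∫₀^π cos(k cos θ) dθ`. -/
noncomputable def J0 (k : ℝ) : ℝ :=
  (1 / Real.pi) * ∫ θ in (0:ℝ)..Real.pi, Real.cos (k * Real.cos θ)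

/-- The Euclidean norm of `k ∈ ℤ²`. -/
noncomputable def eNorm (k : ℤ × ℤ) : ℝ :=
  Real.sqrt ((k.1 : ℝ) ^ 2 + (k.2 : ℝ) ^ 2)

/-- The Fourier multiplier `Ĥ_T(k) = (2/T) ∫₀^∞ (J⁰(‖k‖u))² e^{-u²/T} u du`. -/
noncomputable def Hhat (T : ℝ) (k : ℤ × ℤ) : ℝ :=
  (2 / T) * ∫ u in Set.Ioi (0:ℝ), (J0 (eNorm k * u)) ^ 2 * Real.exp (-u ^ 2 / T) * u

/-! Jensen's inequality for the average defining `J⁰` gives `(J⁰ x)² ≤ (1 + J⁰ (2 x)) / 2`. In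
polar coordinates, the integral of `J⁰ (a r)` against a radial weight is the planar Fourier
transform of that weight; for the Gaussian this is Weber's integral
`∫₀^∞ J⁰(a r) e^{-b r²} r dr = e^{-a² / (4 b)} / (2 b)`. Hence `Ĥ_T(k) ≤ (1 + e^{-T‖k‖²}) / 2`,
and `‖k‖ ≥ 1`. What remains, `T (1 - e^{-1/T}) ≤ 2 (1 - e^{-T})`, holds because `2 T / (1 + T)`,
the harmonic mean of `1` and `T`, separates the two sides. -/

open Set
open scoped RealInnerProductSpace

theorem J0_zero : J0 0 = 1 := by
  simp [J0]

theorem J0_eq_interval_average (x : ℝ) : J0 x = ⨍ θ in 0..π, cos (x * cos θ) := by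
  rw [J0, interval_average_eq, sub_zero, one_div, smul_eq_mul]

theorem J0_sq_le (x : ℝ) : J0 x ^ 2 ≤ (1 + J0 (2 * x)) / 2 := by
  have hint : IntegrableOn (fun θ => cos (x * cos θ)) (uIoc 0 π) :=
    (by fun_prop : Continuous _).integrableOn_uIoc
  have hint_sq : IntegrableOn (fun θ => cos (x * cos θ) ^ 2) (uIoc 0 π) :=
    (by fun_prop : Continuous _).integrableOn_uIoc
  have hvol : volume (uIoc 0 π) = ENNReal.ofReal π := by
    rw [uIoc_of_le pi_pos.le, Real.volume_Ioc, sub_zero]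
  calc J0 x ^ 2 = (⨍ θ in 0..π, cos (x * cos θ)) ^ 2 := by rw [J0_eq_interval_average]
    _ ≤ ⨍ θ in 0..π, cos (x * cos θ) ^ 2 :=
      even_two.convexOn_pow.map_set_average_le (continuous_pow 2).continuousOn isClosed_univ
        (by simp [hvol, pi_pos]) (by simp [hvol]) (by simp) hint hint_sq
    _ = ⨍ θ in 0..π, (1 / 2 + cos (2 * x * cos θ) / 2) := by simp only [cos_sq, mul_assoc]
    _ = (1 + J0 (2 * x)) / 2 := by
      rw [interval_average_eq, intervalIntegral.integral_add (by simp)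
        ((by fun_prop : Continuous _).intervalIntegrable _ _), intervalIntegral.integral_const,
        intervalIntegral.integral_div, J0, sub_zero, smul_eq_mul, smul_eq_mul]
      field_simp

theorem intervalIntegral_neg_self_of_even {E : Type*} [NormedAddCommGroup E] [NormedSpace ℝ E]
    {f : ℝ → E} (hf : ∀ x, f (-x) = f x) {a : ℝ} (hint : IntervalIntegrable f volume 0 a) :
    ∫ x in -a..a, f x = (2 : ℝ) • ∫ x in 0..a, f x := by
  have hneg : ∫ x in -a..0, f x = ∫ x in 0..a, f x := by
    simpa [hf] using (intervalIntegral.integral_comp_neg (a := 0) (b := a) f).symm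
  have hint_neg : IntervalIntegrable f volume (-a) 0 := by
    rw [IntervalIntegrable.iff_comp_neg]
    simpa [hf] using hint.symm
  rw [← intervalIntegral.integral_add_adjacent_intervals hint_neg hint, hneg, two_smul]

theorem integral_Ioo_cos_mul_cos (x : ℝ) :
    ∫ θ in Ioo (-π) π, cos (x * cos θ) = 2 * π * J0 x := by
  rw [← integral_Ioc_eq_integral_Ioo, ← intervalIntegral.integral_of_le (by linarith [pi_pos]),
    intervalIntegral_neg_self_of_even (by simp)
      ((by fun_prop : Continuous _).intervalIntegrable _ _), J0, smul_eq_mul]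
  field_simp

theorem integral_cos_mul_re_mul_radial {g : ℝ → ℝ}
    (hg : IntegrableOn (fun r => r * g r) (Ioi 0)) (a : ℝ) :
    ∫ z : ℂ, cos (a * z.re) * g ‖z‖ = 2 * π * ∫ r in Ioi 0, J0 (a * r) * g r * r := by
  have hprod : IntegrableOn (fun p : ℝ × ℝ => cos (a * (p.1 * cos p.2)) * (p.1 * g p.1))
      (Ioi 0 ×ˢ Ioo (-π) π) := by
    have hfst : IntegrableOn (fun p : ℝ × ℝ => p.1 * g p.1) (Ioi 0 ×ˢ Ioo (-π) π) := by
      rw [IntegrableOn, Measure.volume_eq_prod, ← Measure.prod_restrict]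
      exact hg.comp_fst _
    exact hfst.bdd_mul (c := 1) (by fun_prop : Continuous _).aestronglyMeasurable
      (.of_forall fun p => abs_cos_le_one _)
  calc ∫ z : ℂ, cos (a * z.re) * g ‖z‖
      = ∫ p in Ioi (0 : ℝ) ×ˢ Ioo (-π) π, cos (a * (p.1 * cos p.2)) * (p.1 * g p.1) := by
        rw [← Complex.integral_comp_polarCoord_symm, polarCoord_target]
        refine setIntegral_congr_fun (measurableSet_Ioi.prod measurableSet_Ioo) fun p hp => ?_
        have hnorm : ‖Complex.polarCoord.symm p‖ = p.1 := by
          rw [Complex.norm_polarCoord_symm, abs_of_pos hp.1]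
        have hre : (Complex.polarCoord.symm p).re = p.1 * cos p.2 := by
          simp [Complex.polarCoord_symm_apply, Complex.cos_ofReal_re]
        simp only [hnorm, hre, smul_eq_mul]
        ring
    _ = ∫ r in Ioi (0 : ℝ), ∫ θ in Ioo (-π) π, cos (a * (r * cos θ)) * (r * g r) :=
        setIntegral_prod _ hprod
    _ = ∫ r in Ioi (0 : ℝ), 2 * π * (J0 (a * r) * g r * r) := by
        refine integral_congr_ae (.of_forall fun r => ?_)
        simp only [integral_mul_const, ← mul_assoc a r, integral_Ioo_cos_mul_cos]
        ring
    _ = 2 * π * ∫ r in Ioi 0, J0 (a * r) * g r * r := integral_const_mul _ _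

theorem integral_cos_inner_mul_exp_neg_mul_sq_norm {V : Type*} [NormedAddCommGroup V]
    [InnerProductSpace ℝ V] [FiniteDimensional ℝ V] [MeasurableSpace V] [BorelSpace V]
    {b : ℝ} (hb : 0 < b) (w : V) :
    ∫ v : V, cos ⟪w, v⟫ * exp (-b * ‖v‖ ^ 2) =
      (π / b) ^ (Module.finrank ℝ V / 2 : ℝ) * exp (-‖w‖ ^ 2 / (4 * b)) := by
  have hb' : 0 < (b : ℂ).re := hb
  have hre (v : V) : (Complex.exp (-b * ‖v‖ ^ 2 + Complex.I * ⟪w, v⟫)).re =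
      cos ⟪w, v⟫ * exp (-b * ‖v‖ ^ 2) := by
    rw [Complex.exp_re]
    simp [← Complex.ofReal_pow, mul_comm]
  have hgauss : (π / b : ℂ) ^ (Module.finrank ℝ V / 2 : ℂ) *
      Complex.exp (Complex.I ^ 2 * ‖w‖ ^ 2 / (4 * b)) =
      ((π / b) ^ (Module.finrank ℝ V / 2 : ℝ) * exp (-‖w‖ ^ 2 / (4 * b)) : ℝ) := by
    rw [Complex.ofReal_mul, Complex.ofReal_cpow (by positivity)]
    simp
  calc ∫ v : V, cos ⟪w, v⟫ * exp (-b * ‖v‖ ^ 2)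
      = (∫ v : V, Complex.exp (-b * ‖v‖ ^ 2 + Complex.I * ⟪w, v⟫)).re := by
        simp only [← hre]
        exact integral_re (GaussianFourier.integrable_cexp_neg_mul_sq_norm_add hb' Complex.I w)
    _ = (π / b) ^ (Module.finrank ℝ V / 2 : ℝ) * exp (-‖w‖ ^ 2 / (4 * b)) := by
        rw [GaussianFourier.integral_cexp_neg_mul_sq_norm_add hb', hgauss, Complex.ofReal_re]

theorem integral_J0_mul_exp_neg_mul_sq {b : ℝ} (hb : 0 < b) (a : ℝ) :
    ∫ r in Ioi 0, J0 (a * r) * exp (-b * r ^ 2) * r = exp (-a ^ 2 / (4 * b)) / (2 * b) := by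
  have hradial := integral_cos_mul_re_mul_radial (integrable_mul_exp_neg_mul_sq hb).integrableOn a
  have hgauss := integral_cos_inner_mul_exp_neg_mul_sq_norm hb (a : ℂ)
  simp only [Complex.inner, Complex.conj_ofReal, Complex.re_mul_ofReal, mul_comm _ a,
    Complex.norm_real, norm_eq_abs, sq_abs, Complex.finrank_real_complex, Nat.cast_ofNat,
    div_self (two_ne_zero' ℝ), rpow_one] at hgauss
  rw [hgauss] at hradial
  field_simp at hradial ⊢
  linarith

theorem integrableOn_J0_mul_exp_neg_mul_sq {b : ℝ} (hb : 0 < b) (a : ℝ) :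
    IntegrableOn (fun r => J0 (a * r) * exp (-b * r ^ 2) * r) (Ioi 0) :=
  .of_integral_ne_zero (by rw [integral_J0_mul_exp_neg_mul_sq hb]; positivity)

theorem integral_J0_sq_mul_exp_neg_mul_sq_le {b : ℝ} (hb : 0 < b) (a : ℝ) :
    ∫ r in Ioi 0, J0 (a * r) ^ 2 * exp (-b * r ^ 2) * r ≤ (1 + exp (-a ^ 2 / b)) / (4 * b) := by
  have hint := (integrableOn_J0_mul_exp_neg_mul_sq hb 0).add
    (integrableOn_J0_mul_exp_neg_mul_sq hb (2 * a))
  calc ∫ r in Ioi 0, J0 (a * r) ^ 2 * exp (-b * r ^ 2) * r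
      ≤ ∫ r in Ioi 0, (J0 (0 * r) * exp (-b * r ^ 2) * r +
          J0 (2 * a * r) * exp (-b * r ^ 2) * r) / 2 := by
        refine integral_mono_of_nonneg ?_ (hint.div_const 2) ?_ <;>
          refine (ae_restrict_mem measurableSet_Ioi).mono fun r (hr : 0 < r) => ?_
        · exact mul_nonneg (by positivity) hr.le
        · have hweight : 0 ≤ exp (-b * r ^ 2) * r := by positivity
          have hmul := mul_le_mul_of_nonneg_right (J0_sq_le (a * r)) hweight
          simp only [zero_mul, J0_zero, mul_assoc] at hmul ⊢
          linarith
    _ = (1 + exp (-a ^ 2 / b)) / (4 * b) := by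
        rw [integral_div, integral_add (integrableOn_J0_mul_exp_neg_mul_sq hb _)
          (integrableOn_J0_mul_exp_neg_mul_sq hb _), integral_J0_mul_exp_neg_mul_sq hb,
          integral_J0_mul_exp_neg_mul_sq hb]
        have hzero : -(0 : ℝ) ^ 2 / (4 * b) = 0 := by ring
        have htwo : -(2 * a) ^ 2 / (4 * b) = -a ^ 2 / b := by ring
        rw [hzero, htwo, exp_zero]
        ring

theorem Hhat_le {T : ℝ} (hT : 0 < T) (k : ℤ × ℤ) :
    Hhat T k ≤ (1 + exp (-(T * eNorm k ^ 2))) / 2 := by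
  have h := integral_J0_sq_mul_exp_neg_mul_sq_le (inv_pos.2 hT) (eNorm k)
  have hexponent (u : ℝ) : -u ^ 2 / T = -T⁻¹ * u ^ 2 := by ring
  calc Hhat T k
      = 2 / T * ∫ u in Ioi 0, J0 (eNorm k * u) ^ 2 * exp (-T⁻¹ * u ^ 2) * u := by
        simp only [Hhat, hexponent]
    _ ≤ 2 / T * ((1 + exp (-eNorm k ^ 2 / T⁻¹)) / (4 * T⁻¹)) := by gcongr
    _ = (1 + exp (-(T * eNorm k ^ 2))) / 2 := by
        rw [div_inv_eq_mul, neg_mul, mul_comm (eNorm k ^ 2)]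
        field_simp
        norm_num

theorem one_le_eNorm {k : ℤ × ℤ} (hk : k ≠ 0) : 1 ≤ eNorm k := by
  rw [eNorm, one_le_sqrt]
  have hpos : 0 < k.1 ^ 2 + k.2 ^ 2 := by
    rcases not_and_or.1 (mt Prod.ext_iff.2 hk) with h | h
    · exact add_pos_of_pos_of_nonneg (sq_pos_of_ne_zero h) (sq_nonneg _)
    · exact add_pos_of_nonneg_of_pos (sq_nonneg _) (sq_pos_of_ne_zero h)
  exact_mod_cast hpos

theorem mul_one_sub_exp_neg_inv_le {x : ℝ} (hx : 0 < x) :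
    x * (1 - exp (-x⁻¹)) ≤ 2 * (1 - exp (-x)) := by
  have hupper : x * (1 - exp (-x⁻¹)) ≤ min x 1 := by
    refine le_min (mul_le_of_le_one_right hx.le (sub_le_self 1 (exp_pos _).le)) ?_
    calc x * (1 - exp (-x⁻¹)) ≤ x * x⁻¹ := by gcongr; linarith [one_sub_le_exp_neg x⁻¹]
      _ = 1 := mul_inv_cancel₀ hx.ne'
  have hlower : x / (1 + x) ≤ 1 - exp (-x) := by
    have hexp : exp (-x) ≤ (1 + x)⁻¹ := by
      rw [exp_neg]
      gcongr
      linarith [add_one_le_exp x]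
    calc x / (1 + x) = 1 - (1 + x)⁻¹ := by field_simp; ring
      _ ≤ 1 - exp (-x) := by gcongr
  have hharmonic : min x 1 ≤ 2 * (x / (1 + x)) := by
    rw [← mul_div_assoc, le_div_iff₀ (by positivity)]
    rcases le_total x 1 with h | h
    · rw [min_eq_left h]
      linarith [mul_le_of_le_one_right hx.le h]
    · rw [min_eq_right h]
      linarith
  linarith

theorem le_one_sub_Hhat {T : ℝ} (hT : 0 < T) {k : ℤ × ℤ} (hk : k ≠ 0) :
    T / 4 * (1 - exp (-1 / T)) ≤ 1 - Hhat T k := by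
  have hexp : exp (-(T * eNorm k ^ 2)) ≤ exp (-T) := by
    gcongr
    exact le_mul_of_one_le_right hT.le (one_le_pow₀ (one_le_eNorm hk))
  have hone : -1 / T = -T⁻¹ := by rw [neg_div, one_div]
  rw [hone]
  linarith [Hhat_le hT k, mul_one_sub_exp_neg_inv_le hT]

/-- Bound `‖L_T⁻¹‖ ≤ 4/(1 - e^{-1/T})` in Fourier form. -/
theorem L_inv_bound (T : ℝ) (hT : 0 < T) (k : ℤ × ℤ) (hk : k ≠ 0) :
    T / |1 - Hhat T k| ≤ 4 / (1 - Real.exp (-1 / T)) := by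
  have hgap := le_one_sub_Hhat hT hk
  have hexp : 0 < 1 - exp (-1 / T) :=
    sub_pos.2 (exp_lt_one_iff.2 (div_neg_of_neg_of_pos neg_one_lt_zero hT))
  have hpos : 0 < 1 - Hhat T k := hgap.trans_lt' (by positivity)
  rw [abs_of_pos hpos, div_le_div_iff₀ hpos hexp]
  linarith
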